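/- Let f: X×X → X be a continuous map with |f(x,y)|² ≤ L(1+|x|²+|y|²) for some L > 0 and all x, y ∈ X, and define b_f(x,μ) := ∫_X f(x,y) dμ(y) for (x,μ) ∈ X×P₂(X). If (μ_n)_n ⊂ P₂(X) and μ ∈ P₂(X) are such that μ_n → μ narrowly (i.e. against all bounded continuous functions) and ∫|x|² dμ_n → ∫|x|² dμ (equivalently, μ_n → μ in the 2-Wasserstein sense), then (b_f(·,μ_n))_♯μ_n → (b_f(·,μ))_♯μ narrowly in P(X). -/

import Mathlib

open MeasureTheory ProbabilityTheory Filter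
open scoped ENNReal

variable {X : Type*} [NormedAddCommGroup X] [InnerProductSpace ℝ X]
  [CompleteSpace X] [SecondCountableTopology X] [MeasurableSpace X] [BorelSpace X]

/-- Membership in the Wasserstein space `P₂(Y)`. -/
def MemP2 {Y : Type*} [NormedAddCommGroup Y] [MeasurableSpace Y] (μ : Measure Y) : Prop :=
  IsProbabilityMeasure μ ∧ Integrable (fun y => ‖y‖ ^ 2) μ

/-!
If `μ_i → μ` narrowly, then Banach-valued integrals of a continuous `φ` converge as soon as `‖φ‖`
is dominated by a continuous `ψ` with `∫ ψ dμ_i → ∫ ψ dμ`: approximate `φ` in `L¹(μ)` by a bounded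
continuous map of finite rank, for which narrow convergence gives the limit. The `L¹(μ_i)` error
stays small because it too is dominated by a function `θ` whose integrals converge: integrals of
nonnegative continuous functions are narrowly lower semicontinuous, so applying this to `θ` minus
the error bounds the error from above.

Since `δ_{x'} ⊗ μ_i → δ_x ⊗ μ` narrowly when `x' → x` and `μ_i → μ`, this applies to
`b_f(x', μ_i) = ∫ f d(δ_{x'} ⊗ μ_i)`, so `b_f(·, μ_i)` converges to `b_f(·, μ)` jointly in the index
and the point. Such continuous convergence suffices for passing to the limit in
`(b_f(·, μ_i))_♯ μ_i`, where map and measure vary together.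
-/

open TopologicalSpace
open scoped Topology BoundedContinuousFunction

theorem tendsto_integral_min_natCast {Ω : Type*} [MeasurableSpace Ω] {m : Measure Ω}
    [IsFiniteMeasure m] {φ : Ω → ℝ} (hφ : Integrable φ m) :
    Tendsto (fun k : ℕ => ∫ ω, min (φ ω) k ∂m) atTop (𝓝 (∫ ω, φ ω ∂m)) := by
  refine integral_tendsto_of_tendsto_of_monotone (fun k => hφ.inf (integrable_const _)) hφ
    (.of_forall fun ω j k hjk => min_le_min_left _ (Nat.cast_le.2 hjk))
    (.of_forall fun ω => tendsto_const_nhds.congr' ?_)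
  filter_upwards [eventually_ge_atTop ⌈φ ω⌉₊] with k hk
  exact (min_eq_left (Nat.ceil_le.1 hk)).symm

section NarrowConvergence

variable {Ω ι : Type*} [TopologicalSpace Ω] [MeasurableSpace Ω] {l : Filter ι}
  {μs : ι → ProbabilityMeasure Ω} {μ : ProbabilityMeasure Ω}

theorem eventually_lt_integral_of_tendsto [OpensMeasurableSpace Ω] (hμ : Tendsto μs l (𝓝 μ))
    {φ : Ω → ℝ} (hφ : Continuous φ) (hφ_nonneg : 0 ≤ φ) (hφs_int : ∀ i, Integrable φ (μs i))
    (hφ_int : Integrable φ μ) {c : ℝ} (hc : c < ∫ ω, φ ω ∂μ) :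
    ∀ᶠ i in l, c < ∫ ω, φ ω ∂(μs i) := by
  obtain ⟨k, hk⟩ := ((tendsto_integral_min_natCast hφ_int).eventually_const_lt hc).exists
  let trunc : Ω →ᵇ ℝ := .ofNormedAddCommGroup (fun ω => min (φ ω) k) (by fun_prop) k fun ω => by
    rw [Real.norm_of_nonneg (le_min (hφ_nonneg ω) k.cast_nonneg)]
    exact min_le_right _ _
  have htrunc := ProbabilityMeasure.tendsto_iff_forall_integral_tendsto.1 hμ trunc
  filter_upwards [htrunc.eventually_const_lt hk] with i hi
  exact hi.trans_le (integral_mono (trunc.integrable _) (hφs_int i) fun ω => min_le_left _ _)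

theorem eventually_integral_lt_of_tendsto_of_le [OpensMeasurableSpace Ω] (hμ : Tendsto μs l (𝓝 μ))
    {φ ψ : Ω → ℝ} (hφ : Continuous φ) (hψ : Continuous ψ) (hφψ : φ ≤ ψ)
    (hφs_int : ∀ i, Integrable φ (μs i)) (hφ_int : Integrable φ μ)
    (hψs_int : ∀ i, Integrable ψ (μs i)) (hψ_int : Integrable ψ μ)
    (hψ_lim : Tendsto (fun i => ∫ ω, ψ ω ∂(μs i)) l (𝓝 (∫ ω, ψ ω ∂μ)))
    {c : ℝ} (hc : ∫ ω, φ ω ∂μ < c) :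
    ∀ᶠ i in l, ∫ ω, φ ω ∂(μs i) < c := by
  have hgap : ∫ ω, ψ ω ∂μ - c < ∫ ω, (ψ ω - φ ω) ∂μ := by
    rw [integral_sub hψ_int hφ_int]
    linarith
  obtain ⟨d, hcd, hd⟩ := exists_between hgap
  filter_upwards [hψ_lim.eventually_lt_const (sub_lt_iff_lt_add.1 hcd),
    eventually_lt_integral_of_tendsto hμ (hψ.sub hφ) (fun ω => sub_nonneg.2 (hφψ ω))
      (fun i => (hψs_int i).sub (hφs_int i)) (hψ_int.sub hφ_int) hd] with i hψi hdi
  have := integral_sub (hψs_int i) (hφs_int i)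
  simp only [Pi.sub_apply] at hdi
  linarith

variable {E : Type*} [NormedAddCommGroup E]

theorem integrable_boundedContinuousFunction [PseudoMetrizableSpace Ω] [OpensMeasurableSpace Ω]
    [SecondCountableTopologyEither Ω E] (h : Ω →ᵇ E) (m : Measure Ω) [IsFiniteMeasure m] :
    Integrable h m :=
  .of_bound h.continuous.aestronglyMeasurable ‖h‖ (.of_forall h.norm_coe_le_norm)

variable [NormedSpace ℝ E]

theorem continuous_integral_smul_const [OpensMeasurableSpace Ω] [CompleteSpace E] (g : Ω →ᵇ ℝ)
    (c : E) : Continuous fun ν : ProbabilityMeasure Ω => ∫ ω, g ω • c ∂ν := by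
  simp_rw [integral_smul_const]
  exact (ProbabilityMeasure.continuous_integral_boundedContinuousFunction g).smul continuous_const

theorem exists_boundedContinuous_eLpNorm_smul_const_sub_indicator_le [NormalSpace Ω] [BorelSpace Ω]
    {m : Measure Ω} [IsFiniteMeasure m] [m.WeaklyRegular] {s : Set Ω} (hs : MeasurableSet s)
    (c : E) {ε : ℝ≥0∞} (hε : ε ≠ 0) :
    ∃ g : Ω →ᵇ ℝ, eLpNorm ((fun ω => g ω • c) - s.indicator fun _ => c) 1 m ≤ ε := by
  have hδ : ε / ‖c‖ₑ ≠ 0 := ENNReal.div_ne_zero.2 ⟨hε, enorm_ne_top⟩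
  obtain ⟨g, hg, -⟩ := ((memLp_const (1 : ℝ)).indicator hs
    |>.exists_boundedContinuous_eLpNorm_sub_le (μ := m) ENNReal.one_ne_top hδ)
  refine ⟨g, ?_⟩
  have hfactor : (fun ω => g ω • c) - s.indicator (fun _ => c) =
      fun ω => (⇑g - s.indicator fun _ => (1 : ℝ)) ω • c := by
    ext ω
    by_cases hω : ω ∈ s <;> simp [hω, sub_smul]
  rw [eLpNorm_sub_comm] at hg
  calc eLpNorm ((fun ω => g ω • c) - s.indicator fun _ => c) 1 m
      = eLpNorm (⇑g - s.indicator fun _ => (1 : ℝ)) 1 m * ‖c‖ₑ := by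
        simp only [hfactor, eLpNorm_one_eq_lintegral_enorm, enorm_smul,
          lintegral_mul_const' _ _ enorm_ne_top]
    _ ≤ ε := ENNReal.mul_le_of_le_div hg

variable [PseudoMetrizableSpace Ω] [BorelSpace Ω] [SecondCountableTopologyEither Ω E]
  [CompleteSpace E]

theorem exists_boundedContinuous_continuous_integral {m : Measure Ω} [IsFiniteMeasure m]
    {u : Ω → E} (hu : Integrable u m) {ε : ℝ} (hε : 0 < ε) :
    ∃ h : Ω →ᵇ E, ∫ ω, ‖u ω - h ω‖ ∂m ≤ ε ∧
      Continuous fun ν : ProbabilityMeasure Ω => ∫ ω, h ω ∂ν := by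
  obtain ⟨_, huh, h, rfl, hh⟩ := (memLp_one_iff_integrable.2 hu).induction_dense
    ENNReal.one_ne_top
    (fun g : Ω → E => ∃ h : Ω →ᵇ E, ⇑h = g ∧
      Continuous fun ν : ProbabilityMeasure Ω => ∫ ω, h ω ∂ν)
    (fun c s hs _ δ hδ => by
      obtain ⟨g, hg⟩ :=
        exists_boundedContinuous_eLpNorm_smul_const_sub_indicator_le (m := m) hs c hδ
      exact ⟨_, hg, g • .const Ω c, rfl, continuous_integral_smul_const g c⟩)
    (by
      rintro _ _ ⟨h₁, rfl, hh₁⟩ ⟨h₂, rfl, hh₂⟩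
      refine ⟨h₁ + h₂, rfl, (hh₁.add hh₂).congr fun ν => ?_⟩
      exact (integral_add (integrable_boundedContinuousFunction h₁ ν)
        (integrable_boundedContinuousFunction h₂ ν)).symm)
    (by
      rintro _ ⟨h, rfl, -⟩
      exact h.continuous.aestronglyMeasurable)
    (ENNReal.ofReal_pos.2 hε).ne'
  refine ⟨h, ?_, hh⟩
  have huh_meas : AEStronglyMeasurable (u - ⇑h) m := hu.1.sub h.continuous.aestronglyMeasurable
  rw [eLpNorm_one_eq_lintegral_enorm] at huh
  exact (integral_norm_eq_lintegral_enorm huh_meas).trans_le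
    (ENNReal.toReal_le_of_le_ofReal hε.le huh)

theorem tendsto_integral_of_norm_le (hμ : Tendsto μs l (𝓝 μ)) {φ : Ω → E} {ψ : Ω → ℝ}
    (hφ : Continuous φ) (hψ : Continuous ψ) (hφψ : ∀ ω, ‖φ ω‖ ≤ ψ ω)
    (hψs_int : ∀ i, Integrable ψ (μs i)) (hψ_int : Integrable ψ μ)
    (hψ_lim : Tendsto (fun i => ∫ ω, ψ ω ∂(μs i)) l (𝓝 (∫ ω, ψ ω ∂μ))) :
    Tendsto (fun i => ∫ ω, φ ω ∂(μs i)) l (𝓝 (∫ ω, φ ω ∂μ)) := by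
  have hφ_int {m : Measure Ω} (hm : Integrable ψ m) : Integrable φ m :=
    hm.mono' hφ.aestronglyMeasurable (.of_forall hφψ)
  rw [Metric.tendsto_nhds]
  intro ε hε
  obtain ⟨h, hφh, hh⟩ :=
    exists_boundedContinuous_continuous_integral (hφ_int hψ_int) (show 0 < ε / 4 by positivity)
  have hφ_sub_h_int {m : Measure Ω} [IsFiniteMeasure m] (hm : Integrable ψ m) :
      Integrable (fun ω => φ ω - h ω) m :=
    (hφ_int hm).sub (integrable_boundedContinuousFunction h m)
  have hdist {m : Measure Ω} [IsFiniteMeasure m] (hm : Integrable ψ m) :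
      dist (∫ ω, φ ω ∂m) (∫ ω, h ω ∂m) ≤ ∫ ω, ‖φ ω - h ω‖ ∂m := by
    rw [dist_eq_norm, ← integral_sub (hφ_int hm) (integrable_boundedContinuousFunction h m)]
    exact norm_integral_le_integral_norm _
  have hφ_sub_h : ∀ᶠ i in l, ∫ ω, ‖φ ω - h ω‖ ∂(μs i) < ε / 3 := by
    refine eventually_integral_lt_of_tendsto_of_le hμ (by fun_prop)
      (ψ := fun ω => ψ ω + ‖h‖) (by fun_prop)
      (fun ω => (norm_sub_le _ _).trans (add_le_add (hφψ ω) (h.norm_coe_le_norm ω)))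
      (fun i => (hφ_sub_h_int (hψs_int i)).norm) (hφ_sub_h_int hψ_int).norm
      (fun i => (hψs_int i).add (integrable_const _)) (hψ_int.add (integrable_const _))
      ?_ (hφh.trans_lt (by linarith))
    simpa only [integral_add (hψs_int _) (integrable_const _),
      integral_add hψ_int (integrable_const _), integral_const, probReal_univ, one_smul]
      using hψ_lim.add_const ‖h‖
  filter_upwards [hφ_sub_h, Metric.tendsto_nhds.1 ((hh.tendsto μ).comp hμ) (ε / 3) (by positivity)]
    with i hi hhi
  calc dist (∫ ω, φ ω ∂(μs i)) (∫ ω, φ ω ∂μ)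
      ≤ dist (∫ ω, φ ω ∂(μs i)) (∫ ω, h ω ∂(μs i)) + dist (∫ ω, h ω ∂(μs i)) (∫ ω, h ω ∂μ)
          + dist (∫ ω, h ω ∂μ) (∫ ω, φ ω ∂μ) := dist_triangle4 _ _ _ _
    _ < ε / 3 + ε / 3 + ε / 3 := by
        refine add_lt_add (add_lt_add ((hdist (hψs_int i)).trans_lt hi) hhi) ?_
        rw [dist_comm]
        exact ((hdist hψ_int).trans hφh).trans_lt (by linarith)
    _ = ε := by ring

end NarrowConvergence

theorem tendsto_map_of_tendsto_prod_nhds {Ω Y ι : Type*} [TopologicalSpace Ω]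
    [MeasurableSpace Ω] [OpensMeasurableSpace Ω] [HasOuterApproxClosed Ω] [TopologicalSpace Y]
    [MeasurableSpace Y] [OpensMeasurableSpace Y] {l : Filter ι} [l.IsCountablyGenerated]
    {μs : ι → ProbabilityMeasure Ω} {μ : ProbabilityMeasure Ω} (hμ : Tendsto μs l (𝓝 μ))
    {bs : ι → Ω → Y} {b : Ω → Y} (hbs : ∀ i, AEMeasurable (bs i) (μs i)) (hb : AEMeasurable b μ)
    (hlim : ∀ᵐ x ∂(μ : Measure Ω),
      Tendsto (fun p : ι × Ω => bs p.1 p.2) (l ×ˢ 𝓝 x) (𝓝 (b x))) :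
    Tendsto (fun i => (μs i).map (hbs i)) l (𝓝 (μ.map hb)) := by
  refine tendsto_of_forall_isOpen_le_liminf' fun G hG => ?_
  obtain ⟨s, hs⟩ := l.exists_antitone_basis
  -- The `U k` are open and independent of `i`, so narrow convergence applies to each of them, and
  -- continuous convergence makes them exhaust the preimage of `G`.
  let U (k : ℕ) : Set Ω := interior {x | ∀ i ∈ s k, bs i x ∈ G}
  have hU_mono : Monotone U := fun j k hjk =>
    interior_mono fun x hx i hi => hx i (hs.antitone hjk hi)
  have hU_cover : b ⁻¹' G ≤ᵐ[(μ : Measure Ω)] ⋃ k, U k := by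
    filter_upwards [hlim] with x hx hxG
    obtain ⟨S, hS, V, hV, hSV⟩ := mem_prod_iff.1 (hx (hG.mem_nhds hxG))
    obtain ⟨k, hk⟩ := hs.mem_iff.1 hS
    refine Set.mem_iUnion.2 ⟨k, mem_interior_iff_mem_nhds.2 ?_⟩
    filter_upwards [hV] with y hy i hi
    exact hSV (Set.mk_mem_prod (hk hi) hy)
  have hU_le (k : ℕ) :
      (μ : Measure Ω) (U k) ≤ liminf (fun i => ((μs i).map (hbs i) : Measure Y) G) l := by
    refine (ProbabilityMeasure.le_liminf_measure_open_of_tendsto hμ isOpen_interior).trans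
      (liminf_le_liminf ?_)
    filter_upwards [hs.mem k] with i hi
    rw [ProbabilityMeasure.toMeasure_map,
      Measure.map_apply_of_aemeasurable (hbs i) hG.measurableSet]
    exact measure_mono fun x hx => interior_subset hx i hi
  calc (μ.map hb : Measure Y) G = (μ : Measure Ω) (b ⁻¹' G) :=
        Measure.map_apply_of_aemeasurable hb hG.measurableSet
    _ ≤ (μ : Measure Ω) (⋃ k, U k) := measure_mono_ae hU_cover
    _ = ⨆ k, (μ : Measure Ω) (U k) := hU_mono.measure_iUnion
    _ ≤ liminf (fun i => ((μs i).map (hbs i) : Measure Y) G) l := iSup_le hU_le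

section DiracProd

variable {A S E : Type*} [MeasurableSpace A] [MeasurableSpace S] [NormedAddCommGroup E]
  {φ : A × S → E}

theorem integral_diracProba_prod [NormedSpace ℝ E] (hφ : StronglyMeasurable φ) (x : A)
    (ν : ProbabilityMeasure S) :
    ∫ z, φ z ∂((diracProba x).prod ν : ProbabilityMeasure (A × S)) = ∫ y, φ (x, y) ∂ν := by
  change ∫ z, φ z ∂((Measure.dirac x).prod (ν : Measure S)) = _
  rw [Measure.dirac_prod, integral_map (by fun_prop) hφ.aestronglyMeasurable]

theorem integrable_diracProba_prod_iff (hφ : StronglyMeasurable φ) (x : A)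
    (ν : ProbabilityMeasure S) :
    Integrable φ ((diracProba x).prod ν : ProbabilityMeasure (A × S)) ↔
      Integrable (fun y => φ (x, y)) (ν : Measure S) := by
  change Integrable φ ((Measure.dirac x).prod (ν : Measure S)) ↔ _
  rw [Measure.dirac_prod, integrable_map_measure hφ.aestronglyMeasurable (by fun_prop)]
  rfl

end DiracProd

theorem tendsto_integral_prod_nhds_of_norm_le {A S E ι : Type*} [TopologicalSpace A]
    [PseudoMetrizableSpace A] [SecondCountableTopology A] [TopologicalSpace S]
    [PseudoMetrizableSpace S] [SecondCountableTopology S] [MeasurableSpace S] [BorelSpace S]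
    [NormedAddCommGroup E] [NormedSpace ℝ E] [CompleteSpace E] {l : Filter ι}
    {μs : ι → ProbabilityMeasure S} {μ : ProbabilityMeasure S} (hμ : Tendsto μs l (𝓝 μ))
    {f : A × S → E} {ψ : A × S → ℝ} (hf : Continuous f) (hψ : Continuous ψ)
    (hfψ : ∀ z, ‖f z‖ ≤ ψ z)
    (hψs_int : ∀ i x, Integrable (fun y => ψ (x, y)) (μs i : Measure S)) {x : A}
    (hψ_int : Integrable (fun y => ψ (x, y)) (μ : Measure S))
    (hψ_lim : Tendsto (fun p : ι × A => ∫ y, ψ (p.2, y) ∂(μs p.1)) (l ×ˢ 𝓝 x)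
      (𝓝 (∫ y, ψ (x, y) ∂μ))) :
    Tendsto (fun p : ι × A => ∫ y, f (p.2, y) ∂(μs p.1)) (l ×ˢ 𝓝 x)
      (𝓝 (∫ y, f (x, y) ∂μ)) := by
  borelize A
  have hprod : Tendsto (fun p : ι × A => (diracProba p.2).prod (μs p.1)) (l ×ˢ 𝓝 x)
      (𝓝 ((diracProba x).prod μ)) :=
    (ProbabilityMeasure.continuous_prod.tendsto (diracProba x, μ)).comp
      (((continuous_diracProba.tendsto x).comp tendsto_snd).prodMk_nhds (hμ.comp tendsto_fst))
  have hf_meas := hf.stronglyMeasurable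
  have hψ_meas := hψ.stronglyMeasurable
  simp only [← integral_diracProba_prod hf_meas, ← integral_diracProba_prod hψ_meas,
    ← integrable_diracProba_prod_iff hψ_meas] at hψs_int hψ_int hψ_lim ⊢
  exact tendsto_integral_of_norm_le hprod hf hψ hfψ (fun p => hψs_int p.1 p.2) hψ_int hψ_lim

theorem le_mul_one_add_sq_of_sq_le {L r s t : ℝ} (hL : 0 ≤ L)
    (hr : r ^ 2 ≤ L * (1 + s ^ 2 + t ^ 2)) : r ≤ (1 + L) * (1 + s ^ 2) * (1 + t ^ 2) := by
  have hst : 0 ≤ s ^ 2 * t ^ 2 := by positivity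
  calc r ≤ 1 + r ^ 2 := by nlinarith [sq_nonneg (r - 1)]
    _ ≤ 1 + L * (1 + s ^ 2 + t ^ 2) := by gcongr
    _ ≤ (1 + L) * (1 + s ^ 2) * (1 + t ^ 2) := by
      nlinarith [mul_nonneg hL hst, sq_nonneg s, sq_nonneg t]

theorem stmt4_general {S E ι : Type*} [TopologicalSpace S] [PseudoMetrizableSpace S]
    [SecondCountableTopology S] [MeasurableSpace S] [BorelSpace S] [NormedAddCommGroup E]
    [NormedSpace ℝ E] [CompleteSpace E] [MeasurableSpace E] [BorelSpace E] {l : Filter ι}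
    [l.IsCountablyGenerated] {f : S × S → E} (hf : Continuous f) {a w : S → ℝ}
    (ha : Continuous a) (hw : Continuous w) (hgrowth : ∀ x y, ‖f (x, y)‖ ≤ a x * (1 + w y))
    {μs : ι → Measure S} {μ : Measure S} (hμs : ∀ i, IsProbabilityMeasure (μs i))
    (hμ : IsProbabilityMeasure μ) (hws_int : ∀ i, Integrable w (μs i)) (hw_int : Integrable w μ)
    (hnarrow : ∀ g : S →ᵇ ℝ, Tendsto (fun i => ∫ x, g x ∂(μs i)) l (𝓝 (∫ x, g x ∂μ)))
    (hw_lim : Tendsto (fun i => ∫ y, w y ∂(μs i)) l (𝓝 (∫ y, w y ∂μ))) (g : E →ᵇ ℝ) :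
    Tendsto (fun i => ∫ x, g x ∂((μs i).map (fun x => ∫ y, f (x, y) ∂(μs i)))) l
      (𝓝 (∫ x, g x ∂(μ.map (fun x => ∫ y, f (x, y) ∂μ)))) := by
  let P (i : ι) : ProbabilityMeasure S := ⟨μs i, hμs i⟩
  let Q : ProbabilityMeasure S := ⟨μ, hμ⟩
  have hPQ : Tendsto P l (𝓝 Q) := ProbabilityMeasure.tendsto_iff_forall_integral_tendsto.2 hnarrow
  have hmeas (ν : Measure S) [SFinite ν] : Measurable fun x => ∫ y, f (x, y) ∂ν :=
    hf.stronglyMeasurable.integral_prod_right'.measurable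
  have hweight_int {ν : Measure S} [IsProbabilityMeasure ν] (hν : Integrable w ν) (x : S) :
      Integrable (fun y => a x * (1 + w y)) ν :=
    ((integrable_const 1).add hν).const_mul (a x)
  have hweight {ν : Measure S} [IsProbabilityMeasure ν] (hν : Integrable w ν) (x : S) :
      ∫ y, a x * (1 + w y) ∂ν = a x * (1 + ∫ y, w y ∂ν) := by
    rw [integral_const_mul, integral_add (integrable_const 1) hν]
    simp only [integral_const, probReal_univ, one_smul]
  have hfield (x : S) : Tendsto (fun p : ι × S => ∫ y, f (p.2, y) ∂(P p.1)) (l ×ˢ 𝓝 x)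
      (𝓝 (∫ y, f (x, y) ∂Q)) := by
    refine tendsto_integral_prod_nhds_of_norm_le hPQ hf (ψ := fun z => a z.1 * (1 + w z.2))
      (by fun_prop) (fun z => hgrowth z.1 z.2) (fun i => hweight_int (ν := P i) (hws_int i))
      (hweight_int (ν := Q) hw_int x) ?_
    simp only [hweight (ν := P _) (hws_int _), hweight (ν := Q) hw_int]
    exact ((ha.tendsto x).comp tendsto_snd).mul ((hw_lim.comp tendsto_fst).const_add 1)
  exact ProbabilityMeasure.tendsto_iff_forall_integral_tendsto.1
    (tendsto_map_of_tendsto_prod_nhds hPQ (fun i => (hmeas (P i)).aemeasurable)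
      (hmeas Q).aemeasurable (.of_forall hfield)) g

/-- Let `f : X×X → X` be continuous with
`|f(x,y)|² ≤ L(1+|x|²+|y|²)` and set `b_f(x,μ) := ∫ f(x,y) dμ(y)`.
If `μₙ → μ` narrowly together with convergence of second moments (i.e. in `P₂(X)`),
then `(b_f(·,μₙ))_♯μₙ → (b_f(·,μ))_♯μ` narrowly in `P(X)`. -/
theorem stmt4 (f : X × X → X) (hf : Continuous f) (L : ℝ) (hL : 0 < L)
    (hgrowth : ∀ x y : X, ‖f (x, y)‖ ^ 2 ≤ L * (1 + ‖x‖ ^ 2 + ‖y‖ ^ 2))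
    (μs : ℕ → Measure X) (μ : Measure X) (hμs : ∀ n, MemP2 (μs n)) (hμ : MemP2 μ)
    (hnarrow : ∀ g : BoundedContinuousFunction X ℝ,
      Tendsto (fun n => ∫ x, g x ∂(μs n)) atTop (nhds (∫ x, g x ∂μ)))
    (hmom : Tendsto (fun n => ∫ x, ‖x‖ ^ 2 ∂(μs n)) atTop (nhds (∫ x, ‖x‖ ^ 2 ∂μ))) :
    ∀ g : BoundedContinuousFunction X ℝ,
      Tendsto (fun n => ∫ x, g x ∂((μs n).map (fun x => ∫ y, f (x, y) ∂(μs n))))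
        atTop (nhds (∫ x, g x ∂(μ.map (fun x => ∫ y, f (x, y) ∂μ)))) :=
  stmt4_general hf (a := fun x => (1 + L) * (1 + ‖x‖ ^ 2)) (by fun_prop) (by fun_prop)
    (fun x y => le_mul_one_add_sq_of_sq_le hL.le (hgrowth x y)) (fun n => (hμs n).1) hμ.1
    (fun n => (hμs n).2) hμ.2 hnarrow hmom
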